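/- There exists a constant C > 0, depending only on L (in particular independent of k), such that for every k ∈ ℤ and every smooth L-periodic function w: | ∫₀^L (Ψ_k w)''(x) w'(x) dx | ≤ C ‖w‖_{1,2} ( ∫₀^L w'(x)² dx )^{1/2}. Moreover ∫₀^L (Ψ_k w)''(x) w'(x) dx = ∫₀^L Ψ_k''(x) w(x) w'(x) dx + (3/2) ∫₀^L Ψ_k'(x) w'(x)² dx. -/

import Mathlib

/-!
Expanding `(Ψ w)'' w' = Ψ'' w w' + 2 Ψ' w'² + Ψ w'' w'` and splitting off the exact derivative
`(1/2) (Ψ w'²)'`, whose integral over a period vanishes, leaves `Ψ'' w w' + (3/2) Ψ' w'²`.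
By Cauchy–Schwarz the two remaining integrals are controlled by the suprema of `|Ψ_k''|` and
`|Ψ_k'|`. With `a = 2πk/L` these are at most `c_k a²` and `c_k |a|`, and both are bounded by
`√(2/L)` uniformly in `k` because `c_k² (1 + a² + a⁴) = 2/L`.
-/

open MeasureTheory

noncomputable section

/-- The normalizing constants `c_k = sqrt(2 / (L (1 + (2πk/L)² + (2πk/L)⁴)))`. -/
def cL (L : ℝ) (k : ℤ) : ℝ :=
  Real.sqrt (2 / (L * (1 + (2 * Real.pi * (k : ℝ) / L) ^ 2
    + (2 * Real.pi * (k : ℝ) / L) ^ 4)))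

/-- The trigonometric basis functions `Ψ_k` on the torus `𝕋_L`. -/
def psi (L : ℝ) (k : ℤ) : ℝ → ℝ := fun x =>
  if 0 < k then cL L k * Real.cos (2 * Real.pi * (k : ℝ) * x / L)
  else if k = 0 then cL L 0 / Real.sqrt 2
  else cL L k * Real.sin (2 * Real.pi * (k : ℝ) * x / L)

/-- `‖u‖₂²  = ∫₀^L u²`. -/
def norm2sq (L : ℝ) (u : ℝ → ℝ) : ℝ := ∫ x in (0 : ℝ)..L, (u x) ^ 2

/-- `‖u‖_{1,2}² = ∫₀^L (u² + u'²)`. -/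
def norm12sq (L : ℝ) (u : ℝ → ℝ) : ℝ :=
  ∫ x in (0 : ℝ)..L, ((u x) ^ 2 + (deriv u x) ^ 2)

/-- `‖u‖_{2,2}² = ∫₀^L (u² + u'² + u''²)`. -/
def norm22sq (L : ℝ) (u : ℝ → ℝ) : ℝ :=
  ∫ x in (0 : ℝ)..L, ((u x) ^ 2 + (deriv u x) ^ 2 + (deriv (deriv u) x) ^ 2)

/-- The operator `A^ε u = (1/2) Σ_k λ_k² ∂_x(Ψ_k ∂_x(Ψ_k u)) + ε ∂_x² u`. -/
def Aop (L : ℝ) (lam : ℤ → ℝ) (ε : ℝ) (u : ℝ → ℝ) : ℝ → ℝ := fun x =>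
  (1 / 2) * (∑' k : ℤ,
      (lam k) ^ 2 * deriv (fun y => psi L k y * deriv (fun z => psi L k z * u z) y) x)
    + ε * deriv (deriv u) x

theorem abs_integral_mul_mul_le {α : Type*} [MeasurableSpace α] {μ : Measure α} {M : ℝ}
    {q u v : α → ℝ} (hq : ∀ᵐ x ∂μ, |q x| ≤ M) (hu : MemLp u 2 μ) (hv : MemLp v 2 μ) :
    |∫ x, q x * u x * v x ∂μ| ≤ M * √(∫ x, u x ^ 2 ∂μ) * √(∫ x, v x ^ 2 ∂μ) := by
  obtain rfl | hμ := eq_zero_or_neZero μ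
  · simp
  have hM : 0 ≤ M := hq.exists.elim fun x hx => (abs_nonneg (q x)).trans hx
  have cauchy_schwarz : ∫ x, |u x| * |v x| ∂μ ≤ √(∫ x, u x ^ 2 ∂μ) * √(∫ x, v x ^ 2 ∂μ) := by
    simpa [Real.sqrt_eq_rpow] using integral_mul_norm_le_Lp_mul_Lq (E := ℝ)
      Real.HolderConjugate.two_two (by simpa using hu) (by simpa using hv)
  have hle : ∀ᵐ x ∂μ, ‖q x * u x * v x‖ ≤ M * (|u x| * |v x|) := by
    filter_upwards [hq] with x hx
    rw [Real.norm_eq_abs, abs_mul, abs_mul, mul_assoc]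
    gcongr
  calc |∫ x, q x * u x * v x ∂μ|
      ≤ ∫ x, M * (|u x| * |v x|) ∂μ :=
        norm_integral_le_of_norm_le ((hu.norm.integrable_mul hv.norm).const_mul M) hle
    _ = M * ∫ x, |u x| * |v x| ∂μ := integral_const_mul _ _
    _ ≤ M * (√(∫ x, u x ^ 2 ∂μ) * √(∫ x, v x ^ 2 ∂μ)) := by gcongr
    _ = M * √(∫ x, u x ^ 2 ∂μ) * √(∫ x, v x ^ 2 ∂μ) := (mul_assoc _ _ _).symm

theorem abs_intervalIntegral_mul_mul_le {a b M : ℝ} (hab : a ≤ b) {q u v : ℝ → ℝ}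
    (hq : ∀ x, |q x| ≤ M) (hu : Continuous u) (hv : Continuous v) :
    |∫ x in a..b, q x * u x * v x|
      ≤ M * √(∫ x in a..b, u x ^ 2) * √(∫ x in a..b, v x ^ 2) := by
  have memLp_two {f : ℝ → ℝ} (hf : Continuous f) : MemLp f 2 (volume.restrict (Set.Ioc a b)) :=
    (memLp_two_iff_integrable_sq hf.aestronglyMeasurable).2 ((hf.pow 2).intervalIntegrable a b).1
  simpa only [intervalIntegral.integral_of_le hab] using
    abs_integral_mul_mul_le (.of_forall hq) (memLp_two hu) (memLp_two hv)

theorem deriv_deriv_mul {p w : ℝ → ℝ} (hp : ContDiff ℝ 2 p) (hw : ContDiff ℝ 2 w) (x : ℝ) :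
    deriv (deriv fun y => p y * w y) x
      = deriv (deriv p) x * w x + 2 * (deriv p x * deriv w x) + p x * deriv (deriv w) x := by
  have dp : Differentiable ℝ p := hp.differentiable two_ne_zero
  have dw : Differentiable ℝ w := hw.differentiable two_ne_zero
  have dp' : Differentiable ℝ (deriv p) := hp.differentiable_deriv_two
  have dw' : Differentiable ℝ (deriv w) := hw.differentiable_deriv_two
  have deriv_mul : deriv (fun y => p y * w y) = fun y => deriv p y * w y + p y * deriv w y :=
    funext fun y => deriv_fun_mul (dp y) (dw y)
  rw [deriv_mul, deriv_fun_add (by fun_prop) (by fun_prop), deriv_fun_mul (dp' x) (dw x),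
    deriv_fun_mul (dp x) (dw' x)]
  ring

theorem integral_deriv_deriv_mul_mul_deriv {p w : ℝ → ℝ} (hp : ContDiff ℝ 2 p)
    (hw : ContDiff ℝ 2 w) (a b : ℝ) :
    ∫ x in a..b, deriv (deriv fun y => p y * w y) x * deriv w x
      = (∫ x in a..b, deriv (deriv p) x * w x * deriv w x)
        + (3 / 2) * (∫ x in a..b, deriv p x * deriv w x ^ 2)
        + (1 / 2) * (p b * deriv w b ^ 2 - p a * deriv w a ^ 2) := by
  have hp' : ContDiff ℝ 1 (deriv p) := hp.deriv'
  have hw' : ContDiff ℝ 1 (deriv w) := hw.deriv'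
  have hG : ContDiff ℝ 1 fun y => p y * deriv w y ^ 2 := (hp.of_le one_le_two).mul (hw'.pow 2)
  have deriv_G (x : ℝ) : deriv (fun y => p y * deriv w y ^ 2) x
      = deriv p x * deriv w x ^ 2 + 2 * (p x * deriv (deriv w) x * deriv w x) := by
    have dw' : DifferentiableAt ℝ (deriv w) x := hw'.differentiable one_ne_zero x
    rw [deriv_fun_mul (hp.differentiable two_ne_zero x) (dw'.fun_pow 2), deriv_fun_pow dw']
    ring
  have integrand_eq (x : ℝ) : deriv (deriv fun y => p y * w y) x * deriv w x
      = deriv (deriv p) x * w x * deriv w x + (3 / 2) * (deriv p x * deriv w x ^ 2)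
        + (1 / 2) * deriv (fun y => p y * deriv w y ^ 2) x := by
    rw [deriv_deriv_mul hp hw, deriv_G]
    ring
  have int_p'' : IntervalIntegrable (fun x => deriv (deriv p) x * w x * deriv w x) volume a b :=
    ((hp'.continuous_deriv_one.mul hw.continuous).mul hw'.continuous).intervalIntegrable a b
  have int_p' : IntervalIntegrable (fun x => deriv p x * deriv w x ^ 2) volume a b :=
    (hp'.continuous.mul (hw'.continuous.pow 2)).intervalIntegrable a b
  have int_G' : IntervalIntegrable (deriv fun y => p y * deriv w y ^ 2) volume a b :=
    hG.continuous_deriv_one.intervalIntegrable a b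
  simp only [integrand_eq]
  rw [intervalIntegral.integral_add (int_p''.add (int_p'.const_mul _)) (int_G'.const_mul _),
    intervalIntegral.integral_add int_p'' (int_p'.const_mul _),
    intervalIntegral.integral_const_mul, intervalIntegral.integral_const_mul,
    intervalIntegral.integral_deriv_of_contDiffOn_uIcc hG.contDiffOn]

theorem periodic_deriv {f : ℝ → ℝ} {c : ℝ} (hf : Function.Periodic f c) :
    Function.Periodic (deriv f) c := fun x => by
  rw [← deriv_comp_add_const, funext hf]

section Norm12

variable {L : ℝ} {u : ℝ → ℝ}

theorem integral_sq_le_norm12sq (hL : 0 ≤ L) (hu : ContDiff ℝ 1 u) :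
    ∫ x in (0 : ℝ)..L, u x ^ 2 ≤ norm12sq L u :=
  intervalIntegral.integral_mono hL ((hu.continuous.pow 2).intervalIntegrable 0 L)
    (((hu.continuous.pow 2).add (hu.continuous_deriv_one.pow 2)).intervalIntegrable 0 L)
    fun x => le_add_of_nonneg_right (sq_nonneg (deriv u x))

theorem integral_deriv_sq_le_norm12sq (hL : 0 ≤ L) (hu : ContDiff ℝ 1 u) :
    ∫ x in (0 : ℝ)..L, deriv u x ^ 2 ≤ norm12sq L u :=
  intervalIntegral.integral_mono hL ((hu.continuous_deriv_one.pow 2).intervalIntegrable 0 L)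
    (((hu.continuous.pow 2).add (hu.continuous_deriv_one.pow 2)).intervalIntegrable 0 L)
    fun x => le_add_of_nonneg_left (sq_nonneg (u x))

theorem abs_integral_mul_mul_deriv_le (hL : 0 ≤ L) (hu : ContDiff ℝ 1 u) {q : ℝ → ℝ} {M : ℝ}
    (hq : ∀ x, |q x| ≤ M) :
    |∫ x in (0 : ℝ)..L, q x * u x * deriv u x|
      ≤ M * √(norm12sq L u) * √(∫ x in (0 : ℝ)..L, deriv u x ^ 2) := by
  have hM : 0 ≤ M := (abs_nonneg _).trans (hq 0)
  refine (abs_intervalIntegral_mul_mul_le hL hq hu.continuous hu.continuous_deriv_one).trans ?_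
  gcongr
  exact integral_sq_le_norm12sq hL hu

theorem abs_integral_mul_deriv_sq_le (hL : 0 ≤ L) (hu : ContDiff ℝ 1 u) {q : ℝ → ℝ} {M : ℝ}
    (hq : ∀ x, |q x| ≤ M) :
    |∫ x in (0 : ℝ)..L, q x * deriv u x ^ 2|
      ≤ M * √(norm12sq L u) * √(∫ x in (0 : ℝ)..L, deriv u x ^ 2) := by
  have hM : 0 ≤ M := (abs_nonneg _).trans (hq 0)
  have cu' : Continuous (deriv u) := hu.continuous_deriv_one
  have weighted := abs_intervalIntegral_mul_mul_le hL hq cu' cu'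
  simp only [mul_assoc (q _), ← pow_two (deriv u _)] at weighted
  refine weighted.trans ?_
  gcongr
  exact integral_deriv_sq_le_norm12sq hL hu

end Norm12

/-- Writing the derivative as a phase shift keeps it in the same family, so the rule iterates. -/
theorem deriv_mul_cos_mul_add (A a φ : ℝ) :
    deriv (fun x => A * Real.cos (a * x + φ))
      = fun x => A * a * Real.cos (a * x + (φ + Real.pi / 2)) := by
  ext x
  have hasDerivAt_angle : HasDerivAt (fun x => a * x + φ) a x := by
    simpa using ((hasDerivAt_id x).const_mul a).add_const φ
  rw [(hasDerivAt_angle.cos.const_mul A).deriv, ← add_assoc, Real.cos_add_pi_div_two]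
  ring

theorem exists_psi_eq_mul_cos (L : ℝ) (k : ℤ) :
    ∃ A φ : ℝ, |A| ≤ cL L k ∧
      psi L k = fun x => A * Real.cos (2 * Real.pi * (k : ℝ) / L * x + φ) := by
  have cL_nonneg (k : ℤ) : 0 ≤ cL L k := Real.sqrt_nonneg _
  rcases lt_trichotomy k 0 with hk | rfl | hk
  · refine ⟨cL L k, -(Real.pi / 2), (abs_of_nonneg (cL_nonneg k)).le, funext fun x => ?_⟩
    rw [← sub_eq_add_neg, Real.cos_sub_pi_div_two, div_mul_eq_mul_div]
    simp only [psi, hk.not_gt, hk.ne, if_false]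
  · refine ⟨cL L 0 / √2, 0, ?_, funext fun x => by simp [psi]⟩
    rw [abs_of_nonneg (div_nonneg (cL_nonneg 0) (Real.sqrt_nonneg 2))]
    exact div_le_self (cL_nonneg 0) (Real.one_le_sqrt.2 one_le_two)
  · refine ⟨cL L k, 0, (abs_of_nonneg (cL_nonneg k)).le, funext fun x => ?_⟩
    rw [add_zero, div_mul_eq_mul_div]
    simp only [psi, hk, if_true]

theorem contDiff_psi (L : ℝ) (k : ℤ) {n : WithTop ℕ∞} : ContDiff ℝ n (psi L k) := by
  obtain ⟨A, φ, -, hψ⟩ := exists_psi_eq_mul_cos L k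
  rw [hψ]
  fun_prop

section Psi

variable {L : ℝ}

theorem psi_periodic (hL : L ≠ 0) (k : ℤ) : Function.Periodic (psi L k) L := by
  obtain ⟨A, φ, -, hψ⟩ := exists_psi_eq_mul_cos L k
  intro x
  have angle_add_period : 2 * Real.pi * (k : ℝ) / L * (x + L) + φ
      = 2 * Real.pi * (k : ℝ) / L * x + φ + k * (2 * Real.pi) := by
    field_simp
    ring
  simp only [hψ, angle_add_period, Real.cos_add_int_mul_two_pi]

theorem cL_mul_abs_le (hL : 0 ≤ L) (k : ℤ) {b : ℝ}
    (hb : b ^ 2 ≤ 1 + (2 * Real.pi * (k : ℝ) / L) ^ 2 + (2 * Real.pi * (k : ℝ) / L) ^ 4) :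
    cL L k * |b| ≤ √(2 / L) := by
  rw [cL, ← Real.sqrt_sq_eq_abs, ← Real.sqrt_mul (by positivity), ← div_div, div_mul_eq_mul_div]
  exact Real.sqrt_le_sqrt (div_le_of_le_mul₀ (by positivity) (by positivity) (by gcongr))

theorem abs_mul_mul_cos_le_of_abs_le_cL (hL : 0 ≤ L) {k : ℤ} {A b : ℝ} (hA : |A| ≤ cL L k)
    (hb : b ^ 2 ≤ 1 + (2 * Real.pi * (k : ℝ) / L) ^ 2 + (2 * Real.pi * (k : ℝ) / L) ^ 4)
    (θ : ℝ) : |A * b * Real.cos θ| ≤ √(2 / L) :=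
  calc |A * b * Real.cos θ| = |A| * |b| * |Real.cos θ| := by rw [abs_mul, abs_mul]
    _ ≤ |A| * |b| := mul_le_of_le_one_right (by positivity) (Real.abs_cos_le_one θ)
    _ ≤ cL L k * |b| := by gcongr
    _ ≤ √(2 / L) := cL_mul_abs_le hL k hb

theorem abs_deriv_psi_le (hL : 0 ≤ L) (k : ℤ) (x : ℝ) : |deriv (psi L k) x| ≤ √(2 / L) := by
  obtain ⟨A, φ, hA, hψ⟩ := exists_psi_eq_mul_cos L k
  rw [hψ, deriv_mul_cos_mul_add]
  refine abs_mul_mul_cos_le_of_abs_le_cL hL hA ?_ _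
  linarith [pow_nonneg (sq_nonneg (2 * Real.pi * (k : ℝ) / L)) 2]

theorem abs_deriv_deriv_psi_le (hL : 0 ≤ L) (k : ℤ) (x : ℝ) :
    |deriv (deriv (psi L k)) x| ≤ √(2 / L) := by
  obtain ⟨A, φ, hA, hψ⟩ := exists_psi_eq_mul_cos L k
  rw [hψ, deriv_mul_cos_mul_add, deriv_mul_cos_mul_add, mul_assoc A]
  refine abs_mul_mul_cos_le_of_abs_le_cL hL hA ?_ _
  linarith [sq_nonneg (2 * Real.pi * (k : ℝ) / L)]

theorem psi_second_deriv_pairing_estimate_general (hL : 0 < L) (k : ℤ) {w : ℝ → ℝ}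
    (hw : ContDiff ℝ 2 w) (hwL : deriv w L ^ 2 = deriv w 0 ^ 2) :
    |∫ x in (0 : ℝ)..L, deriv (deriv fun y => psi L k y * w y) x * deriv w x|
        ≤ 5 / 2 * √(2 / L) * √(norm12sq L w) * √(∫ x in (0 : ℝ)..L, deriv w x ^ 2) ∧
      ∫ x in (0 : ℝ)..L, deriv (deriv fun y => psi L k y * w y) x * deriv w x
        = (∫ x in (0 : ℝ)..L, deriv (deriv (psi L k)) x * w x * deriv w x)
          + (3 / 2) * ∫ x in (0 : ℝ)..L, deriv (psi L k) x * deriv w x ^ 2 := by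
  have identity := integral_deriv_deriv_mul_mul_deriv (contDiff_psi L k) hw 0 L
  rw [hwL, (psi_periodic hL.ne' k).eq, sub_self, mul_zero, add_zero] at identity
  refine ⟨?_, identity⟩
  have hw₁ : ContDiff ℝ 1 w := hw.of_le one_le_two
  have bound_second := abs_integral_mul_mul_deriv_le hL.le hw₁ (abs_deriv_deriv_psi_le hL.le k)
  have bound_first := abs_integral_mul_deriv_sq_le hL.le hw₁ (abs_deriv_psi_le hL.le k)
  rw [identity]
  refine (abs_add_le _ _).trans ?_
  rw [abs_mul, abs_of_pos (by norm_num : (0 : ℝ) < 3 / 2)]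
  linarith

end Psi

/-- Uniform-in-`k` estimate and integration-by-parts identity for
`∫₀^L (Ψ_k w)'' w' dx`. -/
theorem psi_second_deriv_pairing_estimate (L : ℝ) (hL : 0 < L) :
    ∃ C : ℝ, 0 < C ∧
      ∀ k : ℤ, ∀ w : ℝ → ℝ, ContDiff ℝ (⊤ : ℕ∞) w → (∀ x : ℝ, w (x + L) = w x) →
        (|∫ x in (0 : ℝ)..L, deriv (deriv (fun y => psi L k y * w y)) x * deriv w x|
            ≤ C * Real.sqrt (norm12sq L w)
              * Real.sqrt (∫ x in (0 : ℝ)..L, (deriv w x) ^ 2)) ∧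
        ((∫ x in (0 : ℝ)..L, deriv (deriv (fun y => psi L k y * w y)) x * deriv w x)
            = (∫ x in (0 : ℝ)..L, deriv (deriv (psi L k)) x * w x * deriv w x)
              + (3 / 2) * ∫ x in (0 : ℝ)..L, deriv (psi L k) x * (deriv w x) ^ 2) := by
  refine ⟨5 / 2 * √(2 / L), by positivity, fun k w hw hwL => ?_⟩
  have deriv_eq : deriv w L = deriv w 0 := (periodic_deriv hwL).eq
  exact psi_second_deriv_pairing_estimate_general hL k (contDiff_infty.1 hw 2) (by rw [deriv_eq])

end
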